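/- Let f : ℝ^n → ℝ^n be locally Lipschitz with f(0) = 0 and such that ẋ = f(x) has unique, forward and backward complete solutions, with flow Φ_f. Let V_a, V_b : ℝ^n → ℝ be locally Lipschitz with V_a nonnegative, and fix ρ > 0 and τ̄ > 0. If there exist μ ∈ (0,1) and ν ∈ ℝ such that (i) V_b(x) ≤ μ V_a(x) for all x ∈ ℝ^n, (ii) D⁺_f V_b(x) ≤ ν V_b(x) for all x ∈ ℝ^n, and (iii) log(μ) + τ̄ (ν + ρ) ≤ 0, then V_b(Φ_f(τ, x)) ≤ e^{−ρτ} V_a(x) for all x ∈ ℝ^n and all τ ∈ [0, τ̄]. -/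

import Mathlib

open Filter Set
open scoped Classical

noncomputable section

/-- The Dini derivative of `V` along the flow `Φ` of a vector field:
`D⁺_f V(x) := limsup_{h→0⁺} (V(Φ(h,x)) − V(x))/h`. -/
def diniDeriv {E : Type*} (Φ : ℝ → E → E) (V : E → ℝ) (x : E) : ℝ :=
  Filter.limsup (fun h : ℝ => (V (Φ h x) - V x) / h) (nhdsWithin 0 (Ioi 0))

/-- Lemma 3: comparison-type estimate. If `V_b ≤ μ V_a`, the Dini
derivative of `V_b` along `f` satisfies `D⁺_f V_b ≤ ν V_b`, and
`log μ + τ̄ (ν + ρ) ≤ 0`, then `V_b(Φ(τ,x)) ≤ e^{−ρτ} V_a(x)` for all `τ ∈ [0, τ̄]`. -/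
theorem dini_comparison_lemma {n : ℕ}
    (f : EuclideanSpace ℝ (Fin n) → EuclideanSpace ℝ (Fin n))
    (Φ : ℝ → EuclideanSpace ℝ (Fin n) → EuclideanSpace ℝ (Fin n))
    (hlip : LocallyLipschitz f) (hf0 : f 0 = 0)
    (hΦ0 : ∀ x, Φ 0 x = x)
    (hode : ∀ x t, HasDerivAt (fun s => Φ s x) (f (Φ t x)) t)
    (huniq : ∀ γ : ℝ → EuclideanSpace ℝ (Fin n),
      (∀ t, HasDerivAt γ (f (γ t)) t) → ∀ t, γ t = Φ t (γ 0))
    (Va Vb : EuclideanSpace ℝ (Fin n) → ℝ)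
    (hVaLip : LocallyLipschitz Va) (hVbLip : LocallyLipschitz Vb)
    (hVaNonneg : ∀ x, 0 ≤ Va x)
    (ρ : ℝ) (hρ : 0 < ρ) (τbar : ℝ) (hτbar : 0 < τbar)
    (μ : ℝ) (hμ : μ ∈ Ioo (0 : ℝ) 1) (ν : ℝ)
    (h1 : ∀ x, Vb x ≤ μ * Va x)
    (h2 : ∀ x, diniDeriv Φ Vb x ≤ ν * Vb x)
    (h3 : Real.log μ + τbar * (ν + ρ) ≤ 0) :
    ∀ x, ∀ τ ∈ Icc (0 : ℝ) τbar, Vb (Φ τ x) ≤ Real.exp (-ρ * τ) * Va x := by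
  have hcomp : ∀ x t h, Φ h (Φ t x) = Φ (t + h) x := by
    intro x t h
    have := huniq (fun s => Φ (t + s) x)
      (fun s => HasDerivAt.comp_const_add t s (hode x (t + s))) h
    simpa using this.symm
  have hbdd : ∀ y, IsBoundedUnder (· ≤ ·) (nhdsWithin 0 (Ioi 0))
      (fun h : ℝ => (Vb (Φ h y) - Vb y) / h) := by
    intro y
    obtain ⟨K, s, hs, hK⟩ := hVbLip y
    have hc : Tendsto (fun h => Φ h y) (nhds 0) (nhds y) := by
      have := (hode y 0).continuousAt.tendsto
      simpa [hΦ0] using this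
    have hO := (hode y 0).isBigO_sub
    obtain ⟨C, hC⟩ := hO.bound
    refine ⟨K * C, ?_⟩
    rw [eventually_map]
    filter_upwards [nhdsWithin_le_nhds (hc hs), nhdsWithin_le_nhds hC, self_mem_nhdsWithin]
      with h h1 h2 h3
    have h3' : (0 : ℝ) < h := h3
    rw [div_le_iff₀ h3']
    have h4 := hK.dist_le_mul _ h1 _ (mem_of_mem_nhds hs)
    simp only [hΦ0, sub_zero, Real.norm_eq_abs, abs_of_pos h3'] at h2
    rw [Real.dist_eq, dist_eq_norm] at h4
    calc Vb (Φ h y) - Vb y ≤ |Vb (Φ h y) - Vb y| := le_abs_self _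
      _ ≤ K * ‖Φ h y - y‖ := h4
      _ ≤ K * (C * h) := by gcongr
      _ = K * C * h := by ring
  intro x τ hτ
  have hcont : Continuous (fun t => Vb (Φ t x)) :=
    hVbLip.continuous.comp (continuous_iff_continuousAt.2 fun t => (hode x t).continuousAt)
  have key := le_gronwallBound_of_liminf_deriv_right_le (f := fun t => Vb (Φ t x))
    (f' := fun t => ν * Vb (Φ t x)) (δ := Vb x) (K := ν) (ε := 0) (a := 0) (b := τbar)
    hcont.continuousOn ?_ (by simp [hΦ0]) (by simp) τ hτ
  · rw [gronwallBound_ε0, sub_zero] at key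
    have hlog : Real.log μ + τ * (ν + ρ) ≤ 0 := by
      have hl : Real.log μ < 0 := Real.log_neg hμ.1 hμ.2
      rcases le_total (ν + ρ) 0 with h | h
      · nlinarith [hτ.1]
      · nlinarith [hτ.2]
    have hexp : μ * Real.exp (ν * τ) ≤ Real.exp (-ρ * τ) := by
      nth_rewrite 1 [← Real.exp_log hμ.1]
      rw [← Real.exp_add]
      apply Real.exp_le_exp.2
      linarith
    calc Vb (Φ τ x) ≤ Vb x * Real.exp (ν * τ) := key
      _ ≤ (μ * Va x) * Real.exp (ν * τ) := by
        have := h1 x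
        gcongr
      _ = (μ * Real.exp (ν * τ)) * Va x := by ring
      _ ≤ _ := mul_le_mul_of_nonneg_right hexp (hVaNonneg x)
  · intro t ht r hr
    have hev := eventually_lt_of_limsup_lt (lt_of_le_of_lt (h2 (Φ t x)) hr) (hbdd (Φ t x))
    have hT : Tendsto (fun z : ℝ => z - t) (nhdsWithin t (Ioi t)) (nhdsWithin 0 (Ioi 0)) := by
      apply tendsto_nhdsWithin_of_tendsto_nhds_of_eventually_within
      · have : Tendsto (fun z : ℝ => z - t) (nhds t) (nhds (t - t)) :=
          (continuous_id.sub continuous_const).tendsto t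
        rw [sub_self] at this
        exact this.mono_left nhdsWithin_le_nhds
      · filter_upwards [self_mem_nhdsWithin] with z hz
        exact sub_pos.2 (mem_Ioi.1 hz)
    apply Eventually.frequently
    filter_upwards [hT.eventually hev] with z hz
    rw [hcomp] at hz
    simpa [slope_def_field, div_eq_inv_mul] using hz
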